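/- arXiv:2504.03211 — 3 statements merged into one kernel-verified Lean document; each statement's English description precedes it below -/
import Mathlib

section
/- Assume each indirect utility U_i : [0,1] → [0,∞) is piecewise constant with finitely many discontinuity points and upper semicontinuous, and let Z be the union over i of the discontinuity points of U_i. Then for every feasible bi-event post-processing plan χ there exists a feasible bi-event post-processing plan χ† whose objective value in LP-TwoStep+ is at least that of χ and such that χ†_{i,j}(q,p) > 0 implies p ∈ Z ∪ {θ_1,…,θ_n}. -/
open Finset

noncomputable section

namespace PersuasiveCalibration

/-- The environment of the persuasive calibration problem: `n` events with
probabilities `lam i > 0` summing to one and sorted expected outcomes `theta i ∈ [0,1]`. -/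
structure Setup (n : ℕ) : Type where
  lam : Fin n → ℝ
  theta : Fin n → ℝ
  lam_pos : ∀ i, 0 < lam i
  lam_sum : ∑ i, lam i = 1
  theta_mono : Monotone theta
  theta_mem : ∀ i, theta i ∈ Set.Icc (0 : ℝ) 1

variable {n : ℕ}

/-- A finitely supported probability distribution on `[0,1]`. -/
def IsDist (μ : ℝ →₀ ℝ) : Prop :=
  (∀ p, 0 ≤ μ p) ∧ (∀ p ∈ μ.support, p ∈ Set.Icc (0 : ℝ) 1) ∧ (∑ p ∈ μ.support, μ p) = 1

/-- A predictor assigns to each event a finitely supported probability distribution on `[0,1]`. -/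
def IsPredictor (f : Fin n → ℝ →₀ ℝ) : Prop := ∀ i, IsDist (f i)

/-- The (unconditional) prediction space of a predictor. -/
def suppF (f : Fin n → ℝ →₀ ℝ) : Finset ℝ := Finset.univ.biUnion fun i => (f i).support

/-- The marginalized predictor `f(p) = ∑ i, λ i * f i p`. -/
def marginal (S : Setup n) (f : Fin n → ℝ →₀ ℝ) (p : ℝ) : ℝ := ∑ i, S.lam i * f i p

/-- The true expected outcome conditional on the prediction `p`. -/
def kappa (S : Setup n) (f : Fin n → ℝ →₀ ℝ) (p : ℝ) : ℝ :=
  (∑ i, S.lam i * f i p * S.theta i) / marginal S f p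

/-- The `ℓ_t`-norm expected calibration error of a predictor. -/
def ECE (S : Setup n) (t : ℝ) (f : Fin n → ℝ →₀ ℝ) : ℝ :=
  (∑ p ∈ suppF f, marginal S f p * |kappa S f p - p| ^ t) ^ (1 / t)

/-- The principal's expected payoff from predictor `f` with indirect utilities `U i`. -/
def payoff (S : Setup n) (U : Fin n → ℝ → ℝ) (f : Fin n → ℝ →₀ ℝ) : ℝ :=
  ∑ i, S.lam i * ∑ p ∈ (f i).support, f i p * U i p

/-- The principal's payoff in the event-independent setting. -/
def payoffEI (S : Setup n) (U : ℝ → ℝ) (f : Fin n → ℝ →₀ ℝ) : ℝ :=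
  payoff S (fun _ => U) f

/-- A predictor is perfectly calibrated if `κ(q) = q` on its support. -/
def PerfectlyCalibrated (S : Setup n) (g : Fin n → ℝ →₀ ℝ) : Prop :=
  ∀ q ∈ suppF g, kappa S g q = q

/-- An event-independent post-processing plan: a finitely supported probability
distribution on `[0,1] × [0,1]`; the first coordinate is `q`, the second is `p`. -/
def IsPlan (χ : ℝ × ℝ →₀ ℝ) : Prop :=
  (∀ x, 0 ≤ χ x) ∧ (∀ x ∈ χ.support, x.1 ∈ Set.Icc (0 : ℝ) 1 ∧ x.2 ∈ Set.Icc (0 : ℝ) 1) ∧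
    (∑ x ∈ χ.support, χ x) = 1

/-- The `ℓ_t` calibration cost `∑ χ(q,p) |q - p|^t` of a plan. -/
def planCost (t : ℝ) (χ : ℝ × ℝ →₀ ℝ) : ℝ := ∑ x ∈ χ.support, χ x * |x.1 - x.2| ^ t

/-- The `q`-marginal `∑_p χ(q, p)` of a plan. -/
def planMargQ (χ : ℝ × ℝ →₀ ℝ) (q : ℝ) : ℝ :=
  ∑ x ∈ χ.support.filter fun x => x.1 = q, χ x

/-- Feasibility of a post-processing plan for a perfectly calibrated predictor `g` and
an `ℓ_t` ECE budget `ε`. -/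
def FeasiblePlan (S : Setup n) (t ε : ℝ) (g : Fin n → ℝ →₀ ℝ) (χ : ℝ × ℝ →₀ ℝ) : Prop :=
  planCost t χ ≤ ε ^ t ∧ ∀ q, planMargQ χ q = marginal S g q

/-- The value `f_i(p) = ∑_q (g̃_i(q)/g(q)) χ(q,p)` of the predictor generated by `(g̃, χ)`. -/
def genVal (S : Setup n) (g : Fin n → ℝ →₀ ℝ) (χ : ℝ × ℝ →₀ ℝ) (i : Fin n) (p : ℝ) : ℝ :=
  ∑ q ∈ suppF g, g i q / marginal S g q * χ (q, p)

/-- A predictor generated by some perfectly calibrated predictor and some feasible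
event-independent post-processing plan. -/
def IsGenerated (S : Setup n) (t ε : ℝ) (f : Fin n → ℝ →₀ ℝ) : Prop :=
  ∃ (g : Fin n → ℝ →₀ ℝ) (χ : ℝ × ℝ →₀ ℝ),
    IsPredictor g ∧ PerfectlyCalibrated S g ∧ IsPlan χ ∧ FeasiblePlan S t ε g χ ∧
      ∀ i p, f i p = genVal S g χ i p

/-- The CDF of a finitely supported distribution. -/
def cdf (μ : ℝ →₀ ℝ) (x : ℝ) : ℝ := ∑ q ∈ μ.support.filter fun q => q ≤ x, μ q

/-- The CDF of the distribution placing mass `λ_i` at `θ_i`. -/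
def priorCdf (S : Setup n) (x : ℝ) : ℝ :=
  ∑ i ∈ Finset.univ.filter fun i => S.theta i ≤ x, S.lam i

/-- `μ` is a mean-preserving contraction of the distribution putting mass `λ_i` on `θ_i`. -/
def MPCprior (S : Setup n) (μ : ℝ →₀ ℝ) : Prop :=
  (∀ s ∈ Set.Icc (0 : ℝ) 1,
      (∫ x in (0 : ℝ)..s, cdf μ x) ≤ ∫ x in (0 : ℝ)..s, priorCdf S x) ∧
    (∫ x in (0 : ℝ)..(1 : ℝ), cdf μ x) = ∫ x in (0 : ℝ)..(1 : ℝ), priorCdf S x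

/-- The objective `∑ χ(q,p) U(p)` of the program LP-TwoStep. -/
def LPobj (U : ℝ → ℝ) (χ : ℝ × ℝ →₀ ℝ) : ℝ := ∑ x ∈ χ.support, χ x * U x.2

/-- Feasibility for the program LP-TwoStep. -/
def LPFeasible (S : Setup n) (ε t : ℝ) (χ : ℝ × ℝ →₀ ℝ) (g : ℝ →₀ ℝ) : Prop :=
  (∀ x, 0 ≤ χ x) ∧
  (∀ x ∈ χ.support, x.1 ∈ Set.Icc (0 : ℝ) 1 ∧ x.2 ∈ Set.Icc (0 : ℝ) 1) ∧
  planCost t χ ≤ ε ^ t ∧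
  (∀ q, planMargQ χ q = g q) ∧ IsDist g ∧ MPCprior S g

/-- The optimal value of LP-TwoStep. -/
def OPTLP (S : Setup n) (ε t : ℝ) (U : ℝ → ℝ) : ℝ :=
  sSup {v | ∃ (χ : ℝ × ℝ →₀ ℝ) (g : ℝ →₀ ℝ), LPFeasible S ε t χ g ∧ v = LPobj U χ}

/-- Symmetric linear-tailed convex function with linear tails `[0, xL]`, `[xH, 1]` and
tail slopes `s1`, `s2` of equal absolute value. -/
def SymLinTailedConvex (Γ : ℝ → ℝ) (xL xH s1 s2 : ℝ) : Prop :=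
  ConvexOn ℝ (Set.Icc (0 : ℝ) 1) Γ ∧ 0 ≤ xL ∧ xL ≤ xH ∧ xH ≤ 1 ∧ |s1| = |s2| ∧
    (∃ c1, ∀ x ∈ Set.Icc (0 : ℝ) xL, Γ x = c1 + s1 * x) ∧
    (∃ c2, ∀ x ∈ Set.Icc xH (1 : ℝ), Γ x = c2 + s2 * x)

/-- Tuples `(i, j, q, p)` indexing a bi-event post-processing plan. -/
abbrev BiTuple (n : ℕ) := Fin n × Fin n × ℝ × ℝ

/-- The contribution ratio `r_{i,j}(q)`. -/
def ratio (S : Setup n) (i j : Fin n) (q : ℝ) : ℝ :=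
  if S.theta i < S.theta j then (S.theta j - q) / (S.theta j - S.theta i) else 1

/-- The contribution of the tuple `x = (i', j', q, p)` to event `i`:
`r_{i,j'}(q)` if `i' = i`, and `1 - r_{i',i}(q)` if `j' = i ≠ i'`. -/
def contrib (S : Setup n) (x : BiTuple n) (i : Fin n) : ℝ :=
  (if x.1 = i then ratio S x.1 x.2.1 x.2.2.1 else 0) +
    (if x.2.1 = i ∧ x.1 ≠ i then 1 - ratio S x.1 x.2.1 x.2.2.1 else 0)

/-- A bi-event post-processing plan. -/
def IsBiPlan (S : Setup n) (χ : BiTuple n →₀ ℝ) : Prop :=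
  (∀ x, 0 ≤ χ x) ∧
    ∀ x ∈ χ.support, x.1 ≤ x.2.1 ∧ x.2.2.1 ∈ Set.Icc (0 : ℝ) 1 ∧
      x.2.2.2 ∈ Set.Icc (0 : ℝ) 1 ∧ S.theta x.1 ≤ x.2.2.1 ∧ x.2.2.1 ≤ S.theta x.2.1

/-- Feasibility of a bi-event post-processing plan for `ℓ_t` ECE budget `ε`. -/
def FeasibleBiPlan (S : Setup n) (t ε : ℝ) (χ : BiTuple n →₀ ℝ) : Prop :=
  IsBiPlan S χ ∧
    (∑ x ∈ χ.support, χ x * |x.2.2.1 - x.2.2.2| ^ t) ≤ ε ^ t ∧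
    ∀ i, (∑ x ∈ χ.support, χ x * contrib S x i) = S.lam i

/-- The value `f_i(p)` of the predictor generated by a bi-event post-processing plan. -/
def genValBi (S : Setup n) (χ : BiTuple n →₀ ℝ) (i : Fin n) (p : ℝ) : ℝ :=
  1 / S.lam i * ∑ x ∈ χ.support.filter fun x => x.2.2.2 = p, χ x * contrib S x i

/-- The objective of LP-TwoStep+: `∑ χ_{i,j}(q,p) U_{i,j}(q,p)`. -/
def biObj (S : Setup n) (U : Fin n → ℝ → ℝ) (χ : BiTuple n →₀ ℝ) : ℝ :=
  ∑ x ∈ χ.support, χ x * (ratio S x.1 x.2.1 x.2.2.1 * U x.1 x.2.2.2 +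
    (1 - ratio S x.1 x.2.1 x.2.2.1) * U x.2.1 x.2.2.2)

/-- The optimal value of LP-TwoStep+. -/
def OPTBi (S : Setup n) (U : Fin n → ℝ → ℝ) (t ε : ℝ) : ℝ :=
  sSup {v | ∃ χ : BiTuple n →₀ ℝ, FeasibleBiPlan S t ε χ ∧ v = biObj S U χ}

/-- `U` is piecewise constant with all its discontinuity points in `Z`. -/
def PiecewiseConstWrt (Z : Finset ℝ) (U : ℝ → ℝ) : Prop :=
  ∀ x ∈ Set.Icc (0 : ℝ) 1, ∀ y ∈ Set.Icc (0 : ℝ) 1,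
    (∀ z ∈ Z, z ∉ Set.uIcc x y) → U x = U y

/-- The bound `S = ⌈2 ln(1/δ) / ln(1+δ)⌉` of the second discretization layer. -/
def Sbound (δ : ℝ) : ℕ := ⌈2 * Real.log (1 / δ) / Real.log (1 + δ)⌉₊

/-- The instance-dependent two-layer discretized set `S_δ`. -/
def gridSet (S : Setup n) (Z : Finset ℝ) (ε t δ : ℝ) : Set ℝ :=
  ({x : ℝ | ∃ k : ℕ, x = (k : ℝ) * δ} ∪ {(1 : ℝ)} ∪ Set.range S.theta ∪ (↑Z : Set ℝ) ∪
      {x : ℝ | ∃ z ∈ (↑Z : Set ℝ) ∪ Set.range S.theta, ∃ s : ℕ, s ≤ Sbound δ ∧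
        (x = z + (ε ^ t * δ * (1 + δ) ^ s) ^ (1 / t) ∨
          x = z - (ε ^ t * δ * (1 + δ) ^ s) ^ (1 / t))}) ∩
    Set.Icc (0 : ℝ) 1

/-- Feasibility for the discretized program LP-DiscTwoStep+. -/
def DiscFeasibleBiPlan (S : Setup n) (Z : Finset ℝ) (t ε δ : ℝ) (χ : BiTuple n →₀ ℝ) : Prop :=
  FeasibleBiPlan S t ε χ ∧
    ∀ x ∈ χ.support, x.2.2.1 ∈ gridSet S Z ε t δ ∧ x.2.2.2 ∈ gridSet S Z ε t δ

/-- The optimal value of LP-DiscTwoStep+. -/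
def OPTBiDisc (S : Setup n) (U : Fin n → ℝ → ℝ) (Z : Finset ℝ) (t ε δ : ℝ) : ℝ :=
  sSup {v | ∃ χ : BiTuple n →₀ ℝ, DiscFeasibleBiPlan S Z t ε δ χ ∧ v = biObj S U χ}

/-- A Bayesian persuasion instance with signal-dependent bias: states `θ_i` with
prior `λ`, actions `A`, sender utility `u a i = u(a, θ_i) ≥ 0`, and receiver utility
determined by `v1 a = v(a,1)` and `v0 a = v(a,0)`. -/
structure PSetup (n : ℕ) (A : Type*) : Type _ where
  lam : Fin n → ℝ
  theta : Fin n → ℝ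
  u : A → Fin n → ℝ
  v1 : A → ℝ
  v0 : A → ℝ
  lam_pos : ∀ i, 0 < lam i
  lam_sum : ∑ i, lam i = 1
  theta_mem : ∀ i, theta i ∈ Set.Icc (0 : ℝ) 1
  u_nonneg : ∀ a i, 0 ≤ u a i

variable {A σT : Type*}

/-- The receiver's utility from action `a` at belief mean `x`. -/
def rcvU (P : PSetup n A) (a : A) (x : ℝ) : ℝ := x * P.v1 a + (1 - x) * P.v0 a

/-- The total probability `m(σ)` of a signal `σ`. -/
def mass [Fintype σT] (P : PSetup n A) (π : Fin n → σT → ℝ) (σ : σT) : ℝ :=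
  ∑ i, P.lam i * π i σ

/-- The biased posterior mean `p(σ)` of the receiver upon signal `σ`. -/
def belief [Fintype σT] (P : PSetup n A) (π : Fin n → σT → ℝ) (b : σT → ℝ) (σ : σT) : ℝ :=
  (b σ + ∑ i, P.lam i * π i σ * P.theta i) / mass P π σ

/-- Validity of a sender strategy `(π, b)`. -/
def ValidStrategy [Fintype σT] (P : PSetup n A) (π : Fin n → σT → ℝ) (b : σT → ℝ) : Prop :=
  (∀ i σ, 0 ≤ π i σ) ∧ (∀ i, ∑ σ, π i σ = 1) ∧
    ∀ σ, 0 < mass P π σ → belief P π b σ ∈ Set.Icc (0 : ℝ) 1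

/-- `astar` is a receiver best-response selection for the strategy `(π, b)`. -/
def BestResponse [Fintype σT] (P : PSetup n A) (π : Fin n → σT → ℝ) (b : σT → ℝ)
    (astar : σT → A) : Prop :=
  ∀ σ, 0 < mass P π σ → ∀ a, rcvU P a (belief P π b σ) ≤ rcvU P (astar σ) (belief P π b σ)

/-- The bounded-rationality constraint on the total bias. -/
def BRconstraint [Fintype σT] (P : PSetup n A) (t ε : ℝ) (π : Fin n → σT → ℝ)
    (b : σT → ℝ) : Prop :=
  (∑ σ, mass P π σ * |b σ / mass P π σ| ^ t) ^ (1 / t) ≤ ε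

/-- The sender's expected payoff from strategy `π` with receiver selection `astar`. -/
def senderPayoff [Fintype σT] (P : PSetup n A) (π : Fin n → σT → ℝ) (astar : σT → A) : ℝ :=
  ∑ i, P.lam i * ∑ σ, π i σ * P.u (astar σ) i

/-- Feasibility for the action-recommendation program P-ActRec. -/
def PActRecFeasible [Fintype A] (P : PSetup n A) (t ε : ℝ)
    (π : Fin n → A → ℝ) (b : A → ℝ) : Prop :=
  (∀ i a, 0 ≤ π i a) ∧ (∀ i, ∑ a, π i a = 1) ∧
  (∀ a, mass P π a = 0 → b a = 0) ∧
  (∑ a, mass P π a * |b a / mass P π a| ^ t) ≤ ε ^ t ∧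
  (∀ a, 0 ≤ b a + ∑ i, P.lam i * π i a * P.theta i) ∧
  (∀ a, b a + ∑ i, P.lam i * π i a * P.theta i ≤ mass P π a) ∧
  ∀ a a' : A,
    (b a + ∑ i, P.lam i * π i a * P.theta i) * P.v1 a' +
        (mass P π a - (b a + ∑ i, P.lam i * π i a * P.theta i)) * P.v0 a' ≤
      (b a + ∑ i, P.lam i * π i a * P.theta i) * P.v1 a +
        (mass P π a - (b a + ∑ i, P.lam i * π i a * P.theta i)) * P.v0 a

/-- The sender-side marginal probability of recommendation `a` (calibration model). -/
def pmass [Fintype A] (S : Setup n) (π : Fin n → A → ℝ) (a : A) : ℝ := ∑ i, S.lam i * π i a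

/-- The biased posterior mean associated with recommendation `a` (calibration model). -/
def pbelief [Fintype A] (S : Setup n) (π : Fin n → A → ℝ) (b : A → ℝ) (a : A) : ℝ :=
  (b a + ∑ i, S.lam i * π i a * S.theta i) / pmass S π a

/-!
Every atom `(i, j, q, p)` of the plan is refined separately, and feasibility and objective are
linear in the plan. Let `P = Z ∪ {θ_1, …, θ_n}`. Walking from `p` towards a point of `P` and
stopping at the first point of `P`, every utility is constant along the way and, by upper
semicontinuity, can only jump up at the end.

* If `P` meets the interval between `p` and `q`, walk from `p` towards `q`: the prediction moves
  closer to `q`, so the calibration cost decreases.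
* Otherwise walk from `p` towards `θ_i` and towards `θ_j`, ending at `L` and `H`. Since no point of
  `P` lies between `p` and `q`, also `L ≤ q ≤ H`, so the atom can be split into perfectly calibrated
  atoms at `L` and `H` with mean `q`. Contributions are affine in `q` and hence preserved, and the
  calibration cost drops to zero.
-/

section FiniteSupport

open Finsupp

variable {α β R M : Type*} [Semiring R]

section Order

variable [PartialOrder R] [AddCommMonoid M] [PartialOrder M] [IsOrderedAddMonoid M] [Module R M]
  [PosSMulMono R M]

theorem linearCombination_le_linearCombination {χ : α →₀ R} (hχ : 0 ≤ χ) {f g : α → M}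
    (hfg : ∀ x ∈ χ.support, f x ≤ g x) :
    linearCombination R f χ ≤ linearCombination R g χ :=
  Finset.sum_le_sum fun x hx => smul_le_smul_of_nonneg_left (hfg x hx) (hχ x)

theorem linearCombination_nonneg {χ : α →₀ R} (hχ : 0 ≤ χ) {f : α → M}
    (hf : ∀ x ∈ χ.support, 0 ≤ f x) : 0 ≤ linearCombination R f χ :=
  Finset.sum_nonneg fun x hx => smul_nonneg (hχ x) (hf x hx)

end Order

theorem exists_mem_support_of_mem_support_linearCombination {χ : α →₀ R} {ν : α → β →₀ R} {y : β}
    (hy : y ∈ (linearCombination R ν χ).support) : ∃ x ∈ χ.support, y ∈ (ν x).support := by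
  classical
  obtain ⟨x, hx, hyx⟩ := Finset.mem_biUnion.1 (support_sum hy)
  exact ⟨x, hx, support_smul hyx⟩

end FiniteSupport

section FirstPoint

theorem exists_first_mem_uIcc {α : Type*} [DistribLattice α] {P : Set α} (hP : P.Finite) (p : α)
    {w : α} (hw : w ∈ P) :
    ∃ z ∈ P, z ∈ Set.uIcc p w ∧ ∀ y ∈ P, y ∈ Set.uIcc p z → y = z := by
  obtain ⟨z, ⟨hzP, hzw⟩, hzmin⟩ := (hP.inter_of_left (Set.uIcc p w)).exists_minimalFor
    (Set.uIcc p) _ ⟨w, hw, Set.right_mem_uIcc⟩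
  refine ⟨z, hzP, hzw, fun y hyP hyz => ?_⟩
  have hyw : y ∈ Set.uIcc p w := Set.uIcc_subset_uIcc_left hzw hyz
  have hzy : z ∈ Set.uIcc p y :=
    hzmin ⟨hyP, hyw⟩ (Set.uIcc_subset_uIcc_left hyz) Set.right_mem_uIcc
  exact Set.eq_of_mem_uIcc_of_mem_uIcc' hyz hzy

theorem le_of_upperSemicontinuousWithinAt_of_mem_closure {X R : Type*} [TopologicalSpace X]
    [LinearOrder R] {f : X → R} {s A : Set X} {z : X} {c : R}
    (hf : UpperSemicontinuousWithinAt f s z) (hAs : A ⊆ s) (hz : z ∈ closure A)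
    (hc : ∀ y ∈ A, c ≤ f y) : c ≤ f z := by
  by_contra! hlt
  have := mem_closure_iff_nhdsWithin_neBot.1 hz
  have hlt_near : ∀ᶠ y in nhdsWithin z A, f y < c := nhdsWithin_mono z hAs (hf c hlt)
  obtain ⟨y, hyc, hyA⟩ := (hlt_near.and self_mem_nhdsWithin).exists
  exact (hc y hyA).not_gt hyc

theorem PiecewiseConstWrt.le_of_first_mem_uIcc {Z : Finset ℝ} {U : ℝ → ℝ}
    (hpc : PiecewiseConstWrt Z U) (husc : UpperSemicontinuousOn U (Set.Icc 0 1)) {p z : ℝ}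
    (hp : p ∈ Set.Icc (0 : ℝ) 1) (hz : z ∈ Set.Icc (0 : ℝ) 1)
    (hfirst : ∀ y ∈ Z, y ∈ Set.uIcc p z → y = z) : U p ≤ U z := by
  rcases eq_or_ne p z with rfl | hpz
  · rfl
  have hsub : openSegment ℝ p z ⊆ Set.Icc 0 1 := (convex_Icc 0 1).openSegment_subset hp hz
  refine le_of_upperSemicontinuousWithinAt_of_mem_closure (husc z hz) hsub
    (closure_openSegment (𝕜 := ℝ) p z ▸ right_mem_segment ℝ p z)
    fun y hy => (hpc p hp y (hsub hy) fun w hwZ hwy => hpz ?_).le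
  have hyz : y ∈ Set.uIcc p z := segment_eq_uIcc p z ▸ openSegment_subset_segment ℝ p z hy
  obtain rfl : w = z := hfirst w hwZ (Set.uIcc_subset_uIcc_left hyz hwy)
  obtain rfl : y = w := Set.eq_of_mem_uIcc_of_mem_uIcc' hyz hwy
  exact right_mem_openSegment_iff.1 hy

theorem exists_mem_uIcc_forall_le {ι : Type*} {U : ι → ℝ → ℝ} {Z : Finset ℝ} {P : Set ℝ}
    (hP : P.Finite) (hZP : ↑Z ⊆ P) (hpc : ∀ i, PiecewiseConstWrt Z (U i))
    (husc : ∀ i, UpperSemicontinuousOn (U i) (Set.Icc 0 1)) {p w : ℝ}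
    (hp : p ∈ Set.Icc (0 : ℝ) 1) (hw : w ∈ Set.Icc (0 : ℝ) 1) (hwP : w ∈ P) :
    ∃ z ∈ P, z ∈ Set.uIcc p w ∧ ∀ i, U i p ≤ U i z := by
  obtain ⟨z, hzP, hzw, hfirst⟩ := exists_first_mem_uIcc hP p hwP
  have hz : z ∈ Set.Icc (0 : ℝ) 1 := Set.uIcc_subset_Icc hp hw hzw
  exact ⟨z, hzP, hzw, fun i =>
    (hpc i).le_of_first_mem_uIcc (husc i) hp hz fun y hy => hfirst y (hZP hy)⟩

end FirstPoint

/-- The conditions that `IsBiPlan` imposes on each tuple `(i, j, q, p)` carrying mass. -/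
def IsValidTuple (S : Setup n) (x : BiTuple n) : Prop :=
  x.1 ≤ x.2.1 ∧ x.2.2.1 ∈ Set.Icc (0 : ℝ) 1 ∧
    x.2.2.2 ∈ Set.Icc (0 : ℝ) 1 ∧ S.theta x.1 ≤ x.2.2.1 ∧ x.2.2.1 ≤ S.theta x.2.1

/-- The calibration cost `|q - p| ^ t` of a unit mass on the tuple `(i, j, q, p)`. -/
def tupleCost (t : ℝ) (x : BiTuple n) : ℝ := |x.2.2.1 - x.2.2.2| ^ t

/-- The utility `U_{i,j}(q,p)` of a unit mass on the tuple `(i, j, q, p)`. -/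
def tupleUtility (S : Setup n) (U : Fin n → ℝ → ℝ) (x : BiTuple n) : ℝ :=
  ratio S x.1 x.2.1 x.2.2.1 * U x.1 x.2.2.2 + (1 - ratio S x.1 x.2.1 x.2.2.1) * U x.2.1 x.2.2.2

section Tuple

variable {S : Setup n} {U : Fin n → ℝ → ℝ} {i j : Fin n} {q p z a b L H : ℝ}

theorem isValidTuple_mk (hij : i ≤ j) (hiq : S.theta i ≤ q) (hqj : q ≤ S.theta j)
    (hp : p ∈ Set.Icc (0 : ℝ) 1) : IsValidTuple S (i, j, q, p) :=
  ⟨hij, ⟨(S.theta_mem i).1.trans hiq, hqj.trans (S.theta_mem j).2⟩, hp, hiq, hqj⟩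

theorem tupleCost_self {t : ℝ} (ht : t ≠ 0) (i j : Fin n) (q : ℝ) :
    tupleCost t (i, j, q, q) = 0 := by
  rw [tupleCost, sub_self, abs_zero, Real.zero_rpow ht]

theorem ratio_mem_Icc (hiq : S.theta i ≤ q) (hqj : q ≤ S.theta j) :
    ratio S i j q ∈ Set.Icc (0 : ℝ) 1 := by
  unfold ratio
  split_ifs with h
  · have hpos : 0 < S.theta j - S.theta i := sub_pos.2 h
    exact ⟨div_nonneg (sub_nonneg.2 hqj) hpos.le, (div_le_one hpos).2 (by linarith)⟩
  · exact ⟨zero_le_one, le_rfl⟩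

theorem ratio_convexCombination (hab : a + b = 1) :
    ratio S i j (a * L + b * H) = a * ratio S i j L + b * ratio S i j H := by
  unfold ratio
  split_ifs
  · linear_combination -(S.theta j / (S.theta j - S.theta i)) * hab
  · linear_combination -hab

theorem contrib_convexCombination (hab : a + b = 1) (p pL pH : ℝ) (k : Fin n) :
    contrib S (i, j, a * L + b * H, p) k =
      a * contrib S (i, j, L, pL) k + b * contrib S (i, j, H, pH) k := by
  obtain rfl : b = 1 - a := eq_sub_of_add_eq' hab
  simp only [contrib, ratio_convexCombination hab]
  split_ifs <;> ring

theorem tupleUtility_convexCombination (hab : a + b = 1) (p : ℝ) :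
    tupleUtility S U (i, j, a * L + b * H, p) =
      a * tupleUtility S U (i, j, L, p) + b * tupleUtility S U (i, j, H, p) := by
  simp only [tupleUtility, ratio_convexCombination hab]
  linear_combination -(U j p) * hab

theorem tupleUtility_mono_prediction (hiq : S.theta i ≤ q) (hqj : q ≤ S.theta j)
    (hU : ∀ k, U k p ≤ U k z) :
    tupleUtility S U (i, j, q, p) ≤ tupleUtility S U (i, j, q, z) :=
  have hr := ratio_mem_Icc hiq hqj
  add_le_add (mul_le_mul_of_nonneg_left (hU i) hr.1)
    (mul_le_mul_of_nonneg_left (hU j) (sub_nonneg.2 hr.2))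

end Tuple

/-- `ν` is a finitely supported measure that can replace a unit mass on the tuple `x` in any plan:
it only predicts values in `P`, contributes as much as `x` to every event, costs at most as much
as `x`, and has at least its utility. -/
structure IsRefinement (S : Setup n) (t : ℝ) (U : Fin n → ℝ → ℝ) (P : Set ℝ) (x : BiTuple n)
    (ν : BiTuple n →₀ ℝ) : Prop where
  nonneg : 0 ≤ ν
  valid : ∀ y ∈ ν.support, IsValidTuple S y
  prediction_mem : ∀ y ∈ ν.support, y.2.2.2 ∈ P
  cost_le : Finsupp.linearCombination ℝ (tupleCost t) ν ≤ tupleCost t x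
  contrib_eq : ∀ i, Finsupp.linearCombination ℝ (contrib S · i) ν = contrib S x i
  utility_le : tupleUtility S U x ≤ Finsupp.linearCombination ℝ (tupleUtility S U) ν

section Refinement

variable {S : Setup n} {t : ℝ} {U : Fin n → ℝ → ℝ} {P : Set ℝ} {i j : Fin n} {q p : ℝ}

theorem isRefinement_single (ht : 0 ≤ t) (hx : IsValidTuple S (i, j, q, p)) {z : ℝ} (hzP : z ∈ P)
    (hz : z ∈ Set.uIcc p q) (hU : ∀ k, U k p ≤ U k z) :
    IsRefinement S t U P (i, j, q, p) (Finsupp.single (i, j, q, z) 1) := by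
  obtain ⟨hij, hq, hp, hiq, hqj⟩ := hx
  have mem_single {y : BiTuple n} (hy : y ∈ (Finsupp.single (i, j, q, z) (1 : ℝ)).support) :
      y = (i, j, q, z) := Finset.mem_singleton.1 (Finsupp.support_single_subset hy)
  refine ⟨Finsupp.single_nonneg.2 zero_le_one, fun y hy => ?_, fun y hy => ?_, ?_, fun k => ?_, ?_⟩
  · rw [mem_single hy]
    exact isValidTuple_mk hij hiq hqj (Set.uIcc_subset_Icc hp hq hz)
  · rwa [mem_single hy]
  all_goals rw [Finsupp.linearCombination_single, one_smul]
  · exact Real.rpow_le_rpow (abs_nonneg _) (Set.abs_sub_right_of_mem_uIcc hz) ht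
  · rfl
  · exact tupleUtility_mono_prediction hiq hqj hU

theorem exists_isRefinement_of_mem_Icc (ht : t ≠ 0) (hij : i ≤ j) {L H : ℝ} (hiL : S.theta i ≤ L)
    (hHj : H ≤ S.theta j) (hq : q ∈ Set.Icc L H) (hLP : L ∈ P) (hHP : H ∈ P)
    (hUL : ∀ k, U k p ≤ U k L) (hUH : ∀ k, U k p ≤ U k H) :
    ∃ ν, IsRefinement S t U P (i, j, q, p) ν := by
  have hLj : L ≤ S.theta j := hq.1.trans (hq.2.trans hHj)
  have hiH : S.theta i ≤ H := hiL.trans (hq.1.trans hq.2)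
  have hL : L ∈ Set.Icc (0 : ℝ) 1 := ⟨(S.theta_mem i).1.trans hiL, hLj.trans (S.theta_mem j).2⟩
  have hH : H ∈ Set.Icc (0 : ℝ) 1 := ⟨(S.theta_mem i).1.trans hiH, hHj.trans (S.theta_mem j).2⟩
  obtain ⟨a, b, ha, hb, hab, rfl⟩ := Icc_subset_segment (𝕜 := ℝ) hq
  have mem_pair {y : BiTuple n} (hy : y ∈ (Finsupp.single (i, j, L, L) a +
      Finsupp.single (i, j, H, H) b).support) : y = (i, j, L, L) ∨ y = (i, j, H, H) := by
    classical
    exact (Finset.mem_union.1 (Finsupp.support_add hy)).imp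
      (fun h => Finset.mem_singleton.1 (Finsupp.support_single_subset h))
      (fun h => Finset.mem_singleton.1 (Finsupp.support_single_subset h))
  refine ⟨Finsupp.single (i, j, L, L) a + Finsupp.single (i, j, H, H) b,
    add_nonneg (Finsupp.single_nonneg.2 ha) (Finsupp.single_nonneg.2 hb),
    fun y hy => ?_, fun y hy => ?_, ?_, fun k => ?_, ?_⟩
  · rcases mem_pair hy with rfl | rfl
    exacts [isValidTuple_mk hij hiL hLj hL, isValidTuple_mk hij hiH hHj hH]
  · rcases mem_pair hy with rfl | rfl
    exacts [hLP, hHP]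
  all_goals simp only [map_add, Finsupp.linearCombination_single, smul_eq_mul]
  · rw [tupleCost_self ht, tupleCost_self ht, mul_zero, mul_zero, add_zero]
    exact Real.rpow_nonneg (abs_nonneg _) t
  · exact (contrib_convexCombination hab p L H k).symm
  · rw [tupleUtility_convexCombination hab]
    exact add_le_add
      (mul_le_mul_of_nonneg_left (tupleUtility_mono_prediction hiL hLj hUL) ha)
      (mul_le_mul_of_nonneg_left (tupleUtility_mono_prediction hiH hHj hUH) hb)

theorem exists_isRefinement (ht : 0 < t) {Z : Finset ℝ} (hpc : ∀ i, PiecewiseConstWrt Z (U i))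
    (husc : ∀ i, UpperSemicontinuousOn (U i) (Set.Icc 0 1)) {x : BiTuple n}
    (hx : IsValidTuple S x) :
    ∃ ν, IsRefinement S t U (↑Z ∪ Set.range S.theta) x ν := by
  obtain ⟨i, j, q, p⟩ := x
  have ⟨hij, hq, hp, hiq, hqj⟩ := hx
  have walk {w : ℝ} (hw : w ∈ Set.Icc (0 : ℝ) 1) (hwP : w ∈ ↑Z ∪ Set.range S.theta) :
      ∃ z ∈ ↑Z ∪ Set.range S.theta, z ∈ Set.uIcc p w ∧ ∀ k, U k p ≤ U k z :=
    exists_mem_uIcc_forall_le (Z.finite_toSet.union (Set.finite_range S.theta))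
      Set.subset_union_left hpc husc hp hw hwP
  by_cases hmeet : ∃ w ∈ ↑Z ∪ Set.range S.theta, w ∈ Set.uIcc p q
  · obtain ⟨w, hwP, hwpq⟩ := hmeet
    obtain ⟨z, hzP, hzw, hUz⟩ := walk (Set.uIcc_subset_Icc hp hq hwpq) hwP
    exact ⟨_, isRefinement_single ht.le hx hzP (Set.uIcc_subset_uIcc_left hwpq hzw) hUz⟩
  · push Not at hmeet
    obtain ⟨L, hLP, hLi, hUL⟩ := walk (S.theta_mem i) (Or.inr ⟨i, rfl⟩)
    obtain ⟨H, hHP, hHj, hUH⟩ := walk (S.theta_mem j) (Or.inr ⟨j, rfl⟩)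
    have hLiq : L ∈ Set.Icc (S.theta i) q := Set.uIcc_of_ge hiq ▸
      (Set.uIcc_subset_uIcc_union_uIcc hLi).resolve_left (hmeet L hLP)
    have hHqj : H ∈ Set.Icc q (S.theta j) := Set.uIcc_of_le hqj ▸
      (Set.uIcc_subset_uIcc_union_uIcc hHj).resolve_left (hmeet H hHP)
    exact exists_isRefinement_of_mem_Icc ht.ne' hij hLiq.1 hHqj.2 ⟨hLiq.2, hHqj.1⟩ hLP hHP hUL hUH

theorem FeasibleBiPlan.linearCombination {ε : ℝ} {χ : BiTuple n →₀ ℝ}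
    (hχ : FeasibleBiPlan S t ε χ) {ν : BiTuple n → BiTuple n →₀ ℝ}
    (hν : ∀ x ∈ χ.support, IsRefinement S t U P x (ν x)) :
    FeasibleBiPlan S t ε (Finsupp.linearCombination ℝ ν χ) := by
  obtain ⟨⟨hnonneg, -⟩, hcost, hcontrib⟩ := hχ
  refine ⟨⟨linearCombination_nonneg hnonneg fun x hx => (hν x hx).nonneg,
    fun y hy => ?_⟩, ?_, fun i => ?_⟩
  · obtain ⟨x, hx, hyx⟩ := exists_mem_support_of_mem_support_linearCombination hy
    exact (hν x hx).valid y hyx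
  · calc Finsupp.linearCombination ℝ (tupleCost t) (Finsupp.linearCombination ℝ ν χ)
      _ = Finsupp.linearCombination ℝ
            (fun x => Finsupp.linearCombination ℝ (tupleCost t) (ν x)) χ :=
          Finsupp.linearCombination_linearCombination ..
      _ ≤ Finsupp.linearCombination ℝ (tupleCost t) χ :=
          linearCombination_le_linearCombination hnonneg fun x hx => (hν x hx).cost_le
      _ ≤ ε ^ t := hcost
  · calc Finsupp.linearCombination ℝ (contrib S · i) (Finsupp.linearCombination ℝ ν χ)
      _ = Finsupp.linearCombination ℝ
            (fun x => Finsupp.linearCombination ℝ (contrib S · i) (ν x)) χ :=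
          Finsupp.linearCombination_linearCombination ..
      _ = Finsupp.linearCombination ℝ (contrib S · i) χ :=
          Finset.sum_congr rfl fun x hx => congrArg (χ x • ·) ((hν x hx).contrib_eq i)
      _ = S.lam i := hcontrib i

theorem biObj_le_biObj_linearCombination {χ : BiTuple n →₀ ℝ} (hχ : 0 ≤ χ)
    {ν : BiTuple n → BiTuple n →₀ ℝ} (hν : ∀ x ∈ χ.support, IsRefinement S t U P x (ν x)) :
    biObj S U χ ≤ biObj S U (Finsupp.linearCombination ℝ ν χ) :=
  calc Finsupp.linearCombination ℝ (tupleUtility S U) χ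
    _ ≤ Finsupp.linearCombination ℝ
          (fun x => Finsupp.linearCombination ℝ (tupleUtility S U) (ν x)) χ :=
        linearCombination_le_linearCombination hχ fun x hx => (hν x hx).utility_le
    _ = Finsupp.linearCombination ℝ (tupleUtility S U) (Finsupp.linearCombination ℝ ν χ) :=
        (Finsupp.linearCombination_linearCombination ..).symm

end Refinement

theorem statement13_general {n : ℕ} (S : Setup n) {t ε : ℝ} (ht : 0 < t) {U : Fin n → ℝ → ℝ}
    {Z : Finset ℝ} (hpc : ∀ i, PiecewiseConstWrt Z (U i))
    (husc : ∀ i, UpperSemicontinuousOn (U i) (Set.Icc (0 : ℝ) 1))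
    {χ : BiTuple n →₀ ℝ} (hχ : FeasibleBiPlan S t ε χ) :
    ∃ χ' : BiTuple n →₀ ℝ, FeasibleBiPlan S t ε χ' ∧ biObj S U χ ≤ biObj S U χ' ∧
      ∀ x ∈ χ'.support, x.2.2.2 ∈ (↑Z : Set ℝ) ∪ Set.range S.theta := by
  have hrefine (x) (hx : x ∈ χ.support) := exists_isRefinement ht hpc husc (hχ.1.2 x hx)
  choose! ν hν using hrefine
  refine ⟨Finsupp.linearCombination ℝ ν χ, hχ.linearCombination hν,
    biObj_le_biObj_linearCombination hχ.1.1 hν, fun y hy => ?_⟩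
  obtain ⟨x, hx, hyx⟩ := exists_mem_support_of_mem_support_linearCombination hy
  exact (hν x hx).prediction_mem y hyx

/-- If every indirect utility is piecewise constant (with all
discontinuity points in the finite set `Z`) and upper semicontinuous, then every
feasible bi-event post-processing plan can be improved to a feasible plan whose
predictions all lie in `Z ∪ {θ_1, …, θ_n}`. -/
theorem statement13 {n : ℕ} (S : Setup n) (t ε : ℝ) (ht : 1 ≤ t) (hε : 0 ≤ ε)
    (U : Fin n → ℝ → ℝ) (hU0 : ∀ i, ∀ p ∈ Set.Icc (0 : ℝ) 1, 0 ≤ U i p)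
    (Z : Finset ℝ)
    (hpc : ∀ i, PiecewiseConstWrt Z (U i))
    (husc : ∀ i, UpperSemicontinuousOn (U i) (Set.Icc (0 : ℝ) 1))
    (χ : BiTuple n →₀ ℝ) (hχ : FeasibleBiPlan S t ε χ) :
    ∃ χ' : BiTuple n →₀ ℝ, FeasibleBiPlan S t ε χ' ∧ biObj S U χ ≤ biObj S U χ' ∧
      ∀ x ∈ χ'.support, x.2.2.2 ∈ (↑Z : Set ℝ) ∪ Set.range S.theta := by
  exact statement13_general S (zero_lt_one.trans_le ht) hpc husc hχ

end PersuasiveCalibration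
end
end

section
/- (Revelation principle for persuasion with signal-dependent bias.) For every sender strategy (π, b) on a finite signal set Σ satisfying the bounded-rationality constraint with budget ε and parameter t, there exists a direct and IC strategy (π†, b†) on signal set A satisfying the same bounded-rationality constraint such that, for every state θ_i and every action a, π†_i(a) = Σ_{σ∈Σ : a*(σ)=a} π_i(σ); in particular, conditional on each state, the distribution of the receiver's chosen action is the same under (π, b) and under (π†, b†), and the sender's payoffs coincide. -/
open Finset

noncomputable section

namespace PersuasiveCalibration

variable {n : ℕ}

variable {A σT : Type*}

/-!
Pool all signals `σ` with the same label `f σ` into one signal, and add up their biases. The pooled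
posterior mean is then the `m`-weighted average of the original posterior means, and the pooled bias
per unit of mass is the `m`-weighted average of `b(σ) / m(σ)`. Since receiver utility is affine in
the belief, the beliefs at which a given action is optimal form a convex set, so labelling signals
by the receiver's action keeps that action optimal; and since `x ↦ |x| ^ t` is convex for `1 ≤ t`,
Jensen's inequality shows that the total bias does not increase.
-/

section WeightedAverages

variable {ι E : Type*} [AddCommGroup E] [Module ℝ E] {s : Set E} {I : Finset ι} {w : ι → ℝ}
  {z : ι → E}

lemma centerMass_mem_of_pos_weight (hs : Convex ℝ s) (hw : ∀ i ∈ I, 0 ≤ w i)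
    (hW : 0 < ∑ i ∈ I, w i) (hz : ∀ i ∈ I, 0 < w i → z i ∈ s) : I.centerMass w z ∈ s := by
  rw [← centerMass_filter_ne_zero]
  refine hs.centerMass_mem (fun i hi => hw i (mem_of_mem_filter i hi)) ?_ fun i hi => ?_
  · rwa [sum_filter_ne_zero]
  · obtain ⟨hiI, hi0⟩ := mem_filter.1 hi
    exact hz i hiI ((hw i hiI).lt_of_ne' hi0)

lemma sum_mul_map_centerMass_le {φ : E → ℝ} (hφ : ConvexOn ℝ s φ) (hw : ∀ i ∈ I, 0 ≤ w i)
    (hz : ∀ i ∈ I, z i ∈ s) :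
    (∑ i ∈ I, w i) * φ (I.centerMass w z) ≤ ∑ i ∈ I, w i * φ (z i) := by
  rcases (sum_nonneg hw).eq_or_lt with hW | hW
  · have hw0 : ∀ i ∈ I, w i = 0 := (sum_eq_zero_iff_of_nonneg hw).1 hW.symm
    rw [← hW, zero_mul, sum_eq_zero fun i hi => by rw [hw0 i hi, zero_mul]]
  · have jensen := hφ.map_centerMass_le hw hW hz
    simpa only [centerMass, Function.comp_apply, smul_eq_mul, le_inv_mul_iff₀ hW] using jensen

end WeightedAverages

lemma convexOn_abs_rpow {t : ℝ} (ht : 1 ≤ t) : ConvexOn ℝ Set.univ fun x : ℝ => |x| ^ t := by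
  refine ⟨convex_univ, fun x _ y _ α β hα hβ hαβ => ?_⟩
  calc |α • x + β • y| ^ t
      ≤ (α • |x| + β • |y|) ^ t := by
        gcongr
        simpa only [smul_eq_mul, abs_mul, abs_of_nonneg hα, abs_of_nonneg hβ]
          using abs_add_le (α * x) (β * y)
    _ ≤ α • |x| ^ t + β • |y| ^ t :=
        (convexOn_rpow ht).2 (abs_nonneg x) (abs_nonneg y) hα hβ hαβ

lemma convex_setOf_rcvU_le (P : PSetup n A) (a a' : A) :
    Convex ℝ {x | rcvU P a x ≤ rcvU P a' x} := by
  intro x hx y hy α β hα hβ hαβ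
  have rcvU_affine (c : A) :
      rcvU P c (α • x + β • y) = α * rcvU P c x + β * rcvU P c y := by
    simp only [rcvU, smul_eq_mul]
    linear_combination -P.v0 c * hαβ
  simp only [Set.mem_ofPred_eq, rcvU_affine] at hx hy ⊢
  gcongr

section Pooling

variable {τ : Type*} [Fintype σT] [DecidableEq τ]

/-- The signal distributions obtained by reporting only the label `f σ` of the signal `σ`. -/
def poolSignals (f : σT → τ) (π : Fin n → σT → ℝ) (i : Fin n) (y : τ) : ℝ :=
  ∑ σ with f σ = y, π i σ

/-- The total bias of the signals labelled `y` by `f`. A strategy's bias is unconstrained on signals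
of mass zero; writing it as `m(σ) * (b(σ) / m(σ))` discards those, because `x / 0 = 0`. -/
def poolBias (P : PSetup n A) (f : σT → τ) (π : Fin n → σT → ℝ) (b : σT → ℝ) (y : τ) : ℝ :=
  ∑ σ with f σ = y, mass P π σ * (b σ / mass P π σ)

variable {P : PSetup n A} {π : Fin n → σT → ℝ} {b : σT → ℝ}

lemma mass_nonneg (hπ : ∀ i σ, 0 ≤ π i σ) (σ : σT) : 0 ≤ mass P π σ :=
  sum_nonneg fun i _ => mul_nonneg (P.lam_pos i).le (hπ i σ)

lemma eq_zero_of_mass_eq_zero (hπ : ∀ i σ, 0 ≤ π i σ) {σ : σT} (hσ : mass P π σ = 0)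
    (i : Fin n) : π i σ = 0 := by
  have hterm : P.lam i * π i σ = 0 :=
    (sum_eq_zero_iff_of_nonneg fun j _ => mul_nonneg (P.lam_pos j).le (hπ j σ)).1 hσ i (mem_univ i)
  exact (mul_eq_zero.1 hterm).resolve_left (P.lam_pos i).ne'

lemma mass_mul_belief (hπ : ∀ i σ, 0 ≤ π i σ) (σ : σT) :
    mass P π σ * belief P π b σ =
      mass P π σ * (b σ / mass P π σ) + ∑ i, P.lam i * π i σ * P.theta i := by
  by_cases hσ : mass P π σ = 0
  · simp [hσ, eq_zero_of_mass_eq_zero hπ hσ]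
  · rw [belief, mul_div_cancel₀ _ hσ, mul_div_cancel₀ _ hσ]

variable [Fintype τ]

lemma mass_poolSignals (f : σT → τ) (y : τ) :
    mass P (poolSignals f π) y = ∑ σ with f σ = y, mass P π σ := by
  simp only [mass, poolSignals, mul_sum]
  exact sum_comm

lemma belief_pool (f : σT → τ) (hπ : ∀ i σ, 0 ≤ π i σ) (y : τ) :
    belief P (poolSignals f π) (poolBias P f π b) y =
      ({σ | f σ = y} : Finset σT).centerMass (mass P π) (belief P π b) := by
  have true_mean : ∑ i, P.lam i * poolSignals f π i y * P.theta i =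
      ∑ σ with f σ = y, ∑ i, P.lam i * π i σ * P.theta i := by
    simp only [poolSignals, mul_sum, sum_mul]
    exact sum_comm
  rw [belief, true_mean, poolBias, mass_poolSignals, ← sum_add_distrib, div_eq_inv_mul]
  simp only [centerMass, smul_eq_mul, mass_mul_belief hπ]

lemma poolBias_div_mass (f : σT → τ) (y : τ) :
    poolBias P f π b y / mass P (poolSignals f π) y =
      ({σ | f σ = y} : Finset σT).centerMass (mass P π) fun σ => b σ / mass P π σ := by
  simp only [poolBias, mass_poolSignals, centerMass, smul_eq_mul, div_eq_inv_mul]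

lemma belief_pool_mem {f : σT → τ} (hπ : ∀ i σ, 0 ≤ π i σ) {s : Set ℝ} (hs : Convex ℝ s) {y : τ}
    (hy : 0 < mass P (poolSignals f π) y)
    (hmem : ∀ σ, f σ = y → 0 < mass P π σ → belief P π b σ ∈ s) :
    belief P (poolSignals f π) (poolBias P f π b) y ∈ s := by
  rw [belief_pool f hπ]
  rw [mass_poolSignals] at hy
  exact centerMass_mem_of_pos_weight hs (fun σ _ => mass_nonneg hπ σ) hy
    fun σ hσ => hmem σ (mem_filter.1 hσ).2

lemma ValidStrategy.pool (h : ValidStrategy P π b) (f : σT → τ) :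
    ValidStrategy P (poolSignals f π) (poolBias P f π b) := by
  obtain ⟨hπ, hsum, hbelief⟩ := h
  refine ⟨fun i y => sum_nonneg fun σ _ => hπ i σ, fun i => ?_, fun y hy => ?_⟩
  · exact (sum_fiberwise univ f (π i)).trans (hsum i)
  · exact belief_pool_mem hπ (convex_Icc 0 1) hy fun σ _ => hbelief σ

lemma BestResponse.pool {f : σT → τ} {c : τ → A} (h : BestResponse P π b (c ∘ f))
    (hπ : ∀ i σ, 0 ≤ π i σ) : BestResponse P (poolSignals f π) (poolBias P f π b) c := by
  intro y hy a
  refine belief_pool_mem hπ (convex_setOf_rcvU_le P a (c y)) hy ?_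
  rintro σ rfl hσ
  exact h σ hσ a

lemma sum_mass_mul_abs_bias_rpow_pool_le {t : ℝ} (ht : 1 ≤ t) (hπ : ∀ i σ, 0 ≤ π i σ)
    (f : σT → τ) :
    ∑ y, mass P (poolSignals f π) y * |poolBias P f π b y / mass P (poolSignals f π) y| ^ t ≤
      ∑ σ, mass P π σ * |b σ / mass P π σ| ^ t := by
  rw [← sum_fiberwise univ f fun σ => mass P π σ * |b σ / mass P π σ| ^ t]
  refine sum_le_sum fun y _ => ?_
  rw [poolBias_div_mass, mass_poolSignals]
  exact sum_mul_map_centerMass_le (convexOn_abs_rpow ht) (fun σ _ => mass_nonneg hπ σ)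
    fun _ _ => Set.mem_univ _

lemma BRconstraint.pool {t ε : ℝ} (h : BRconstraint P t ε π b) (ht : 1 ≤ t)
    (hπ : ∀ i σ, 0 ≤ π i σ) (f : σT → τ) :
    BRconstraint P t ε (poolSignals f π) (poolBias P f π b) := by
  have mass_pool_nonneg (y : τ) : 0 ≤ mass P (poolSignals f π) y :=
    mass_nonneg (fun i y => sum_nonneg fun σ _ => hπ i σ) y
  refine (Real.rpow_le_rpow ?_ (sum_mass_mul_abs_bias_rpow_pool_le ht hπ f) ?_).trans h
  · exact sum_nonneg fun y _ => mul_nonneg (mass_pool_nonneg y) (by positivity)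
  · positivity

lemma senderPayoff_poolSignals (f : σT → τ) (c : τ → A) :
    senderPayoff P (poolSignals f π) c = senderPayoff P π (c ∘ f) := by
  have action_value (i : Fin n) :
      ∑ y, poolSignals f π i y * P.u (c y) i = ∑ σ, π i σ * P.u (c (f σ)) i := by
    rw [← sum_fiberwise univ f]
    refine sum_congr rfl fun y _ => ?_
    rw [poolSignals, sum_mul]
    exact sum_congr rfl fun σ hσ => by rw [(mem_filter.1 hσ).2]
  simp only [senderPayoff, action_value, Function.comp_apply]

end Pooling

/-- Revelation principle for persuasion with signal-dependent bias:
every valid sender strategy `(π, b)` with a best-response selection `astar` and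
bounded-rationality budget `(ε, t)` can be turned into a direct and IC strategy
`(π†, b†)` on the action set which pools signals by recommended action, satisfies the
same bounded-rationality constraint, induces the same conditional action distribution,
and gives the sender the same payoff. -/
theorem statement16 {n : ℕ} {A σT : Type*} [Fintype A] [DecidableEq A] [Fintype σT]
    (P : PSetup n A) (t ε : ℝ) (ht : 1 ≤ t) (hε : 0 ≤ ε)
    (π : Fin n → σT → ℝ) (b : σT → ℝ) (astar : σT → A)
    (hvalid : ValidStrategy P π b) (hbr : BestResponse P π b astar)
    (hcon : BRconstraint P t ε π b) :
    ∃ (π' : Fin n → A → ℝ) (b' : A → ℝ),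
      ValidStrategy P π' b' ∧ BestResponse P π' b' id ∧ BRconstraint P t ε π' b' ∧
      (∀ i a, π' i a = ∑ σ ∈ Finset.univ.filter fun σ => astar σ = a, π i σ) ∧
      senderPayoff P π' id = senderPayoff P π astar := by
  have hπ : ∀ i σ, 0 ≤ π i σ := hvalid.1
  exact ⟨poolSignals astar π, poolBias P astar π b, hvalid.pool astar,
    BestResponse.pool (c := id) hbr hπ, hcon.pool ht hπ astar, fun _ _ => rfl,
    senderPayoff_poolSignals astar id⟩

end PersuasiveCalibration
end
end

section
/- (Instance equivalence: from predictor to persuasion strategy.) Fix ε ≥ 0 and t ≥ 1, and let f be a finitely supported (ε,ℓ_t)-calibrated predictor in the persuasive calibration model. Define, for each action a ∈ A, π_i(a) = Σ_{p∈supp(f_i): a*(p)=a} f_i(p) and b(a) = Σ_{p: a*(p)=a} Σ_i λ_i·f_i(p)·(p − θ_i). Then in the associated persuasion instance: (π, b) is a sender strategy with signal set A; for every a with m(a) = Σ_i λ_i·π_i(a) > 0 the biased posterior mean p(a) = (b(a) + Σ_i λ_i·π_i(a)·θ_i)/m(a) lies in [0,1] and a maximizes v(·, p(a)) over A (so the strategy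 is direct and IC); the bounded-rationality constraint (Σ_{a: m(a)>0} m(a)·|b(a)/m(a)|^t)^{1/t} ≤ ε holds; and the sender's payoff when recommendations are followed, Σ_i λ_i·Σ_a π_i(a)·u(a,θ_i), equals V(f). -/
open Finset

noncomputable section

namespace PersuasiveCalibration

variable {n : ℕ}

variable {A σT : Type*}

/-!
Pooling all predictions that induce the action `a` gives the receiver the belief `p(a)` which is
the average of these predictions, weighted by their marginal probabilities; likewise `b(a)/m(a)`
is the weighted average of the calibration errors `p - κ(p)`. The beliefs at which `a` is optimal
form a convex set, hence contain `p(a)`, and Jensen's inequality for `|x| ^ t` bounds the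
total bias by the calibration error.
-/

section Convexity

theorem convexOn_norm_rpow {E : Type*} [SeminormedAddCommGroup E] [NormedSpace ℝ E] {t : ℝ}
    (ht : 1 ≤ t) : ConvexOn ℝ Set.univ fun x : E => ‖x‖ ^ t := by
  refine ⟨convex_univ, fun x _ y _ α β hα hβ hαβ => ?_⟩
  calc ‖α • x + β • y‖ ^ t
      ≤ (α • ‖x‖ + β • ‖y‖) ^ t :=
        Real.rpow_le_rpow (norm_nonneg _)
          (convexOn_univ_norm.2 trivial trivial hα hβ hαβ) (zero_le_one.trans ht)
    _ ≤ α • ‖x‖ ^ t + β • ‖y‖ ^ t :=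
        (convexOn_rpow ht).2 (norm_nonneg x) (norm_nonneg y) hα hβ hαβ

variable {𝕜 E β ι κ : Type*} [Field 𝕜] [LinearOrder 𝕜] [IsStrictOrderedRing 𝕜]
  [AddCommGroup E] [AddCommGroup β] [PartialOrder β] [IsOrderedAddMonoid β]
  [Module 𝕜 E] [Module 𝕜 β] [IsStrictOrderedModule 𝕜 β]
  {C : Set E} {φ : E → β} {s : Finset ι} {w : ι → 𝕜} {z : ι → E}

theorem sum_smul_map_centerMass_le (hφ : ConvexOn 𝕜 C φ) (hw : ∀ i ∈ s, 0 ≤ w i)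
    (hz : ∀ i ∈ s, z i ∈ C) :
    (∑ i ∈ s, w i) • φ (s.centerMass w z) ≤ ∑ i ∈ s, w i • φ (z i) := by
  rcases (sum_nonneg hw).eq_or_lt with hzero | hpos
  · have hw_zero := (sum_eq_zero_iff_of_nonneg hw).1 hzero.symm
    rw [← hzero, zero_smul, sum_eq_zero fun i hi => by rw [hw_zero i hi, zero_smul]]
  · calc (∑ i ∈ s, w i) • φ (s.centerMass w z)
        ≤ (∑ i ∈ s, w i) • s.centerMass w (φ ∘ z) :=
          smul_le_smul_of_nonneg_left (hφ.map_centerMass_le hw hpos hz) hpos.le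
      _ = ∑ i ∈ s, w i • φ (z i) := smul_inv_smul₀ hpos.ne' _

theorem sum_fiberwise_smul_map_centerMass_le [Fintype κ] [DecidableEq κ] (g : ι → κ)
    (hφ : ConvexOn 𝕜 C φ) (hw : ∀ i ∈ s, 0 ≤ w i) (hz : ∀ i ∈ s, z i ∈ C) :
    ∑ k, (∑ i ∈ s with g i = k, w i) • φ ((s.filter fun i => g i = k).centerMass w z) ≤
      ∑ i ∈ s, w i • φ (z i) := by
  rw [← sum_fiberwise s g]
  exact sum_le_sum fun k _ => sum_smul_map_centerMass_le hφ
    (fun i hi => hw i (filter_subset _ _ hi)) fun i hi => hz i (filter_subset _ _ hi)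

end Convexity

/-- The belief means in `[0,1]` at which `a` is optimal for a receiver with utility
`v(a, 0) = v0 a` and `v(a, 1) = v1 a`. -/
def optimalBeliefs (v0 v1 : A → ℝ) (a : A) : Set ℝ :=
  {x | x ∈ Set.Icc (0 : ℝ) 1 ∧ ∀ a', x * v1 a' + (1 - x) * v0 a' ≤ x * v1 a + (1 - x) * v0 a}

theorem convex_optimalBeliefs (v0 v1 : A → ℝ) (a : A) : Convex ℝ (optimalBeliefs v0 v1 a) := by
  refine fun x hx y hy α β hα hβ hαβ => ⟨convex_Icc 0 1 hx.1 hy.1 hα hβ hαβ, fun a' => ?_⟩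
  have utility_comb (c : A) : (α • x + β • y) * v1 c + (1 - (α • x + β • y)) * v0 c =
      α * (x * v1 c + (1 - x) * v0 c) + β * (y * v1 c + (1 - y) * v0 c) := by
    simp only [smul_eq_mul]
    linear_combination -v0 c * hαβ
  rw [utility_comb, utility_comb]
  exact add_le_add (mul_le_mul_of_nonneg_left (hx.2 a') hα)
    (mul_le_mul_of_nonneg_left (hy.2 a') hβ)

section Predictor

variable {S : Setup n} {f : Fin n → ℝ →₀ ℝ} {p : ℝ}

theorem support_subset_suppF (f : Fin n → ℝ →₀ ℝ) (i : Fin n) : (f i).support ⊆ suppF f :=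
  subset_biUnion_of_mem (fun i => (f i).support) (mem_univ i)

theorem mem_Icc_of_mem_suppF (hf : IsPredictor f) (hp : p ∈ suppF f) :
    p ∈ Set.Icc (0 : ℝ) 1 := by
  obtain ⟨i, -, hi⟩ := mem_biUnion.1 hp
  exact (hf i).2.1 p hi

theorem marginal_nonneg (hf : ∀ i p, 0 ≤ f i p) (p : ℝ) : 0 ≤ marginal S f p :=
  sum_nonneg fun i _ => mul_nonneg (S.lam_pos i).le (hf i p)

/-- Off the support `κ(p)` is the junk value `0 / 0`, but nonnegativity makes both sides vanish. -/
theorem marginal_mul_kappa (hf : ∀ i p, 0 ≤ f i p) (p : ℝ) :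
    marginal S f p * kappa S f p = ∑ i, S.lam i * f i p * S.theta i := by
  refine mul_div_cancel_of_imp' fun hzero => sum_eq_zero fun i hi => ?_
  have hterm_nonneg : ∀ j ∈ univ, 0 ≤ S.lam j * f j p :=
    fun j _ => mul_nonneg (S.lam_pos j).le (hf j p)
  rw [(sum_eq_zero_iff_of_nonneg hterm_nonneg).1 hzero i hi, zero_mul]

theorem sum_lam_mul_sub_theta (S : Setup n) (f : Fin n → ℝ →₀ ℝ) (p : ℝ) :
    ∑ i, S.lam i * f i p * (p - S.theta i) =
      marginal S f p * p - ∑ i, S.lam i * f i p * S.theta i := by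
  simp only [marginal, mul_sub, sum_sub_distrib, sum_mul]

end Predictor

section Pooling

variable [DecidableEq A]

/-- The signaling scheme `π` obtained from the predictor `f` by sending the signal `σ p` in place
of the prediction `p`. -/
def pooledStrategy (f : Fin n → ℝ →₀ ℝ) (σ : ℝ → A) (i : Fin n) (a : A) : ℝ :=
  ∑ p ∈ (f i).support with σ p = a, f i p

/-- The total bias `b` of the predictions of `f` that are pooled into the signal `a`. -/
def pooledBias (S : Setup n) (f : Fin n → ℝ →₀ ℝ) (σ : ℝ → A) (a : A) : ℝ :=
  ∑ p ∈ suppF f with σ p = a, ∑ i, S.lam i * f i p * (p - S.theta i)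

variable {S : Setup n} {f : Fin n → ℝ →₀ ℝ} {σ : ℝ → A}

theorem pooledStrategy_nonneg (hf : ∀ i p, 0 ≤ f i p) (i : Fin n) (a : A) :
    0 ≤ pooledStrategy f σ i a :=
  sum_nonneg fun p _ => hf i p

theorem pooledStrategy_eq_sum_suppF (f : Fin n → ℝ →₀ ℝ) (σ : ℝ → A) (i : Fin n) (a : A) :
    pooledStrategy f σ i a = ∑ p ∈ suppF f with σ p = a, f i p := by
  refine sum_subset (filter_subset_filter _ (support_subset_suppF f i)) fun p hp hp' => ?_
  exact Finsupp.notMem_support_iff.1 fun h => hp' (mem_filter.2 ⟨h, (mem_filter.1 hp).2⟩)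

theorem sum_lam_mul_pooledStrategy_mul (S : Setup n) (f : Fin n → ℝ →₀ ℝ) (σ : ℝ → A)
    (c : Fin n → ℝ) (a : A) :
    ∑ i, S.lam i * pooledStrategy f σ i a * c i =
      ∑ p ∈ suppF f with σ p = a, ∑ i, S.lam i * f i p * c i := by
  simp only [pooledStrategy_eq_sum_suppF, mul_sum, sum_mul]
  exact sum_comm

variable [Fintype A]

theorem sum_pooledStrategy_mul (f : Fin n → ℝ →₀ ℝ) (σ : ℝ → A) (i : Fin n) (u : A → ℝ) :
    ∑ a, pooledStrategy f σ i a * u a = ∑ p ∈ (f i).support, f i p * u (σ p) := by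
  rw [← sum_fiberwise (f i).support σ]
  refine sum_congr rfl fun a _ => ?_
  rw [pooledStrategy, sum_mul]
  exact sum_congr rfl fun p hp => by rw [(mem_filter.1 hp).2]

theorem sum_pooledStrategy (f : Fin n → ℝ →₀ ℝ) (σ : ℝ → A) (i : Fin n) :
    ∑ a, pooledStrategy f σ i a = ∑ p ∈ (f i).support, f i p :=
  sum_fiberwise _ _ _

theorem pmass_pooledStrategy (S : Setup n) (f : Fin n → ℝ →₀ ℝ) (σ : ℝ → A) (a : A) :
    pmass S (pooledStrategy f σ) a = ∑ p ∈ suppF f with σ p = a, marginal S f p := by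
  simpa only [pmass, marginal, mul_one] using sum_lam_mul_pooledStrategy_mul S f σ (fun _ => 1) a

theorem pbelief_pooledStrategy_eq_centerMass (S : Setup n) (f : Fin n → ℝ →₀ ℝ) (σ : ℝ → A)
    (a : A) :
    pbelief S (pooledStrategy f σ) (pooledBias S f σ) a =
      ((suppF f).filter fun p => σ p = a).centerMass (marginal S f) id := by
  simp only [pbelief, pooledBias, sum_lam_mul_pooledStrategy_mul, ← sum_add_distrib,
    sum_lam_mul_sub_theta, sub_add_cancel, pmass_pooledStrategy, centerMass, smul_eq_mul, id,
    div_eq_inv_mul]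

theorem pooledBias_div_pmass_eq_centerMass (hf : ∀ i p, 0 ≤ f i p) (a : A) :
    pooledBias S f σ a / pmass S (pooledStrategy f σ) a =
      ((suppF f).filter fun p => σ p = a).centerMass (marginal S f) fun p => p - kappa S f p := by
  simp only [pooledBias, sum_lam_mul_sub_theta, ← marginal_mul_kappa hf, ← mul_sub,
    pmass_pooledStrategy, centerMass, smul_eq_mul, div_eq_inv_mul]

theorem pbelief_pooledStrategy_mem {C : Set ℝ} (hC : Convex ℝ C) (hf : ∀ i p, 0 ≤ f i p) {a : A}
    (ha : 0 < pmass S (pooledStrategy f σ) a) (hmem : ∀ p ∈ suppF f, σ p = a → p ∈ C) :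
    pbelief S (pooledStrategy f σ) (pooledBias S f σ) a ∈ C := by
  rw [pmass_pooledStrategy] at ha
  rw [pbelief_pooledStrategy_eq_centerMass]
  exact hC.centerMass_mem (fun p _ => marginal_nonneg hf p) ha
    fun p hp => hmem p (mem_filter.1 hp).1 (mem_filter.1 hp).2

theorem sum_pmass_mul_abs_bias_rpow_le_ECE (hf : ∀ i p, 0 ≤ f i p) {t : ℝ} (ht : 1 ≤ t) :
    (∑ a, pmass S (pooledStrategy f σ) a *
      |pooledBias S f σ a / pmass S (pooledStrategy f σ) a| ^ t) ^ (1 / t) ≤ ECE S t f := by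
  have hmass_nonneg (a : A) : 0 ≤ pmass S (pooledStrategy f σ) a :=
    sum_nonneg fun i _ => mul_nonneg (S.lam_pos i).le (pooledStrategy_nonneg hf i a)
  refine Real.rpow_le_rpow
    (sum_nonneg fun a _ => mul_nonneg (hmass_nonneg a) (by positivity)) ?_ (by positivity)
  simp_rw [pooledBias_div_pmass_eq_centerMass hf, pmass_pooledStrategy, abs_sub_comm (kappa S f _)]
  exact sum_fiberwise_smul_map_centerMass_le σ (convexOn_norm_rpow (E := ℝ) ht)
    (fun p _ => marginal_nonneg hf p) fun _ _ => Set.mem_univ _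

end Pooling

/-- Instance equivalence, from predictor to persuasion strategy:
an `(ε, ℓ_t)`-calibrated predictor `f` induces, via pooling predictions by the action
they recommend, a direct and IC sender strategy `(π, b)` on the action set which
satisfies the bounded-rationality constraint and whose sender payoff equals `V(f)`. -/
theorem statement18 {n : ℕ} {A : Type*} [Fintype A] [DecidableEq A] (S : Setup n)
    (u0 u1 : Fin n → A → ℝ) (v0 v1 : A → ℝ)
    (hu : ∀ i a, 0 ≤ u0 i a ∧ 0 ≤ u1 i a)
    (astar : ℝ → A)
    (hastar : ∀ p ∈ Set.Icc (0 : ℝ) 1, ∀ a : A,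
      p * v1 a + (1 - p) * v0 a ≤ p * v1 (astar p) + (1 - p) * v0 (astar p))
    (t ε : ℝ) (ht : 1 ≤ t) (hε : 0 ≤ ε)
    (f : Fin n → ℝ →₀ ℝ) (hf : IsPredictor f) (hcal : ECE S t f ≤ ε)
    (π : Fin n → A → ℝ) (b : A → ℝ)
    (hπ : ∀ i a, π i a = ∑ p ∈ (f i).support.filter fun p => astar p = a, f i p)
    (hb : ∀ a, b a = ∑ p ∈ (suppF f).filter fun p => astar p = a,
        ∑ i, S.lam i * f i p * (p - S.theta i)) :
    (∀ i a, 0 ≤ π i a) ∧ (∀ i, ∑ a, π i a = 1) ∧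
    (∀ a, 0 < pmass S π a → pbelief S π b a ∈ Set.Icc (0 : ℝ) 1 ∧
      ∀ a' : A, pbelief S π b a * v1 a' + (1 - pbelief S π b a) * v0 a' ≤
        pbelief S π b a * v1 a + (1 - pbelief S π b a) * v0 a) ∧
    (∑ a, pmass S π a * |b a / pmass S π a| ^ t) ^ (1 / t) ≤ ε ∧
    (∑ i, S.lam i * ∑ a, π i a * ((1 - S.theta i) * u0 i a + S.theta i * u1 i a)) =
      ∑ i, S.lam i * ∑ p ∈ (f i).support,
        f i p * (S.theta i * u1 i (astar p) + (1 - S.theta i) * u0 i (astar p)) := by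
  obtain rfl : π = pooledStrategy f astar := funext₂ hπ
  obtain rfl : b = pooledBias S f astar := funext hb
  have hf_nonneg : ∀ i p, 0 ≤ f i p := fun i => (hf i).1
  have hopt : ∀ p ∈ suppF f, p ∈ optimalBeliefs v0 v1 (astar p) := fun p hp =>
    ⟨mem_Icc_of_mem_suppF hf hp, hastar p (mem_Icc_of_mem_suppF hf hp)⟩
  refine ⟨pooledStrategy_nonneg hf_nonneg, fun i => ?_, fun a ha => ?_, ?_, ?_⟩
  · rw [sum_pooledStrategy, (hf i).2.2]
  · exact pbelief_pooledStrategy_mem (convex_optimalBeliefs v0 v1 a) hf_nonneg ha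
      fun p hp hpa => hpa ▸ hopt p hp
  · exact (sum_pmass_mul_abs_bias_rpow_le_ECE hf_nonneg ht).trans hcal
  · simp only [sum_pooledStrategy_mul, add_comm]

end PersuasiveCalibration
end
end
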